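/- Let n ≥ 2, let q be the Lorentzian quadratic form q(x) = 2x₁x_{n+1} + x₂² + ⋯ + xₙ² on ℝ^{n+1}, let ρ be a continuous representation of O(1,n) on a finite-dimensional real normed vector space V, and let 𝒢 ⊆ O(1,n). Let p, p', p'' be three pairwise non-proportional limit directions of 𝒢 and let E = span{p, p', p''} (a 3-dimensional subspace on which q is nondegenerate). Then every vector v ∈ V that is stable under 𝒢 satisfies ρ(g)v = v for every g ∈ SO°(E). -/

import Mathlib

open Matrix Filter Topology Bornology

noncomputable section

/-- The Lorentzian quadratic form `q(x) = 2 x₁ x_{n+1} + x₂² + ⋯ + xₙ²` on `ℝ^{n+1}`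
(coordinates indexed by `Fin (n+1)`, so `x₁` is `x 0` and `x_{n+1}` is `x (Fin.last n)`). -/
def lorQ (n : ℕ) (x : Fin (n + 1) → ℝ) : ℝ :=
  2 * x 0 * x (Fin.last n) +
    ∑ i : Fin (n + 1), if i ≠ 0 ∧ i ≠ Fin.last n then x i ^ 2 else 0

/-- The polar bilinear form `B` of `lorQ`. -/
def lorB (n : ℕ) (x y : Fin (n + 1) → ℝ) : ℝ :=
  x 0 * y (Fin.last n) + x (Fin.last n) * y 0 +
    ∑ i : Fin (n + 1), if i ≠ 0 ∧ i ≠ Fin.last n then x i * y i else 0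

/-- The Lorentz group `O(1,n)`: linear automorphisms of `ℝ^{n+1}` preserving `lorQ`. -/
def LorentzGrp (n : ℕ) : Subgroup (GL (Fin (n + 1)) ℝ) where
  carrier := {g | ∀ x, lorQ n ((g : Matrix (Fin (n + 1)) (Fin (n + 1)) ℝ).mulVec x) = lorQ n x}
  one_mem' := by intro x; simp
  mul_mem' := by
    intro a b ha hb x
    have h : ((a * b : GL (Fin (n + 1)) ℝ) : Matrix (Fin (n + 1)) (Fin (n + 1)) ℝ).mulVec x
        = (a : Matrix (Fin (n + 1)) (Fin (n + 1)) ℝ).mulVec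
            ((b : Matrix (Fin (n + 1)) (Fin (n + 1)) ℝ).mulVec x) := by
      rw [Matrix.mulVec_mulVec]; rfl
    rw [h, ha, hb]
  inv_mem' := by
    intro g hg x
    have h : (g : Matrix (Fin (n + 1)) (Fin (n + 1)) ℝ).mulVec
        ((↑g⁻¹ : Matrix (Fin (n + 1)) (Fin (n + 1)) ℝ).mulVec x) = x := by
      rw [Matrix.mulVec_mulVec]
      have : (g : Matrix (Fin (n + 1)) (Fin (n + 1)) ℝ) * (↑g⁻¹ : Matrix (Fin (n + 1)) (Fin (n + 1)) ℝ)
          = (1 : Matrix (Fin (n + 1)) (Fin (n + 1)) ℝ) := by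
        rw [← Units.val_mul, mul_inv_cancel, Units.val_one]
      rw [this, Matrix.one_mulVec]
    calc lorQ n ((↑g⁻¹ : Matrix (Fin (n + 1)) (Fin (n + 1)) ℝ).mulVec x)
        = lorQ n ((g : Matrix (Fin (n + 1)) (Fin (n + 1)) ℝ).mulVec
            ((↑g⁻¹ : Matrix (Fin (n + 1)) (Fin (n + 1)) ℝ).mulVec x)) := (hg _).symm
      _ = lorQ n x := by rw [h]

/-- The action of an element of `O(1,n)` on a vector of `ℝ^{n+1}`. -/
def lorAct {n : ℕ} (g : LorentzGrp n) (x : Fin (n + 1) → ℝ) : Fin (n + 1) → ℝ :=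
  ((g : GL (Fin (n + 1)) ℝ) : Matrix (Fin (n + 1)) (Fin (n + 1)) ℝ).mulVec x

/-- The base point `o = e₁ − e_{n+1}`, a timelike vector. -/
def basePt (n : ℕ) : Fin (n + 1) → ℝ := fun i =>
  if i = 0 then 1 else if i = Fin.last n then -1 else 0

/-- `u` is a limit direction of a subset `G` of `O(1,n)`: `u` is nonzero lightlike, and some
sequence `λ_k • g_k⁻¹(o)`, with `g_k ∈ G`, converges to `u`. -/
def IsLimitDirection (n : ℕ) (G : Set (LorentzGrp n)) (u : Fin (n + 1) → ℝ) : Prop :=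
  u ≠ 0 ∧ lorQ n u = 0 ∧
    ∃ (g : ℕ → LorentzGrp n) (lam : ℕ → ℝ), (∀ k, g k ∈ G) ∧
      Tendsto (fun k => lam k • lorAct (g k)⁻¹ (basePt n)) atTop (𝓝 u)

/-- A vector `v` is stable under `G ⊆ O(1,n)` if its `ρ`-orbit under `G` is bounded. -/
def IsStableVec {n : ℕ} {V : Type*} [NormedAddCommGroup V] [NormedSpace ℝ V]
    (ρ : LorentzGrp n →* (V →L[ℝ] V)) (G : Set (LorentzGrp n)) (v : V) : Prop :=
  IsBounded {w : V | ∃ g ∈ G, w = ρ g v}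

/-- `SO°(E)`: the identity component of the subgroup of `O(1,n)` of elements leaving `E`
invariant and fixing pointwise every vector orthogonal to `E`. -/
def SOIdComp (n : ℕ) (E : Submodule ℝ (Fin (n + 1) → ℝ)) : Set (LorentzGrp n) :=
  connectedComponentIn
    {g : LorentzGrp n |
      E.map ((g : GL (Fin (n + 1)) ℝ) : Matrix (Fin (n + 1)) (Fin (n + 1)) ℝ).mulVecLin = E ∧
      ∀ x : Fin (n + 1) → ℝ, (∀ e ∈ E, lorB n x e = 0) → lorAct g x = x} 1

/-!
Let `p` and `r` be limit directions of `G`, and let `boost c` multiply `p` by `c` and `r` by `c⁻¹`.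
The elements of `G` whose inverses carry the base point towards `p` agree with `boost c`, `c → 0`,
up to compact factors on the left and factors tending to `1` on the right. Boosts dilate the
unipotent one-parameter groups, so `ρ` is polynomial on these, and `ρ (boost (s ^ 2))` is a Laurent
polynomial in `s`. Boundedness of the orbit of `v` therefore kills the negative coefficients at
`v`, and exchanging `p` and `r` kills the positive ones: boosts between two limit directions fix
`v`. The commutator of such a boost with the unipotent at `p` carrying `r` to the third limit
direction is again unipotent, whence `v` is fixed by the torus of `SO°(E)` and by two opposite
unipotent subgroups; their big cell is a neighbourhood of `1`.
-/

section OneParameterGroups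

variable {A : Type*} [NormedRing A] [NormedAlgebra ℝ A]

lemma isNilpotent_of_conj_eq_smul (c : Aˣ) {N : A} {q : ℝ} (hq : 1 < q)
    (hN : c * N * (c⁻¹ : Aˣ) = q • N) : IsNilpotent N := by
  have hpow (k : ℕ) : c * N ^ k * (c⁻¹ : Aˣ) = q ^ k • N ^ k := by
    rw [← Units.conj_pow, hN, smul_pow]
  obtain ⟨k, hk⟩ := pow_unbounded_of_one_lt (‖(c : A)‖ * ‖((c⁻¹ : Aˣ) : A)‖) hq
  refine ⟨k, norm_le_zero_iff.1 (le_of_not_gt fun hpos => hk.not_ge ?_)⟩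
  refine le_of_mul_le_mul_right ?_ hpos
  calc q ^ k * ‖N ^ k‖ = ‖c * N ^ k * (c⁻¹ : Aˣ)‖ := by
        rw [hpow, norm_smul, Real.norm_of_nonneg (by positivity)]
    _ ≤ ‖(c : A)‖ * ‖N ^ k‖ * ‖((c⁻¹ : Aˣ) : A)‖ := norm_mul₃_le
    _ = ‖(c : A)‖ * ‖((c⁻¹ : Aˣ) : A)‖ * ‖N ^ k‖ := by ring

lemma exp_smul_eq_sum_range {N : A} {d : ℕ} (hN : N ^ d = 0) (s : ℝ) :
    NormedSpace.exp (s • N) = ∑ i ∈ Finset.range d, s ^ i • (i.factorial : ℝ)⁻¹ • N ^ i := by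
  rw [NormedSpace.exp_eq_tsum ℝ]
  simp only [smul_pow, smul_comm _ (s ^ _)]
  refine tsum_eq_sum fun i hi => ?_
  rw [pow_eq_zero_of_le (not_lt.1 (mt Finset.mem_range.2 hi)) hN, smul_zero, smul_zero]

lemma exists_isUnit_intervalIntegral [CompleteSpace A] {f : ℝ → A} (hf : Continuous f)
    (h0 : IsUnit (f 0)) : ∃ t, IsUnit (∫ x in (0 : ℝ)..t, f x) := by
  have hslope := hasDerivAt_iff_tendsto_slope_zero.1 (hf.integral_hasStrictDerivAt 0 0).hasDerivAt
  have hunit := hslope.eventually (Units.isOpen.mem_nhds h0)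
  obtain ⟨t, ht, ht0⟩ := (hunit.and eventually_mem_nhdsWithin).exists
  refine ⟨t, ?_⟩
  rw [zero_add, intervalIntegral.integral_same, sub_zero, ← Units.smul_mk0 (inv_ne_zero ht0)] at ht
  exact (isUnit_smul_iff _ _).1 ht

lemma addChar_mul_intervalIntegral [CompleteSpace A] {f : AddChar ℝ A} (hf : Continuous f)
    (s t : ℝ) :
    f s * ∫ x in (0 : ℝ)..t, f x = (∫ x in (0 : ℝ)..s + t, f x) - ∫ x in (0 : ℝ)..s, f x := by
  calc f s * ∫ x in (0 : ℝ)..t, f x = ∫ x in (0 : ℝ)..t, f (s + x) := by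
        simp only [AddChar.map_add_eq_mul]
        exact ((ContinuousLinearMap.mul ℝ A (f s)).intervalIntegral_comp_comm
          (hf.intervalIntegrable 0 t)).symm
    _ = ∫ x in s..s + t, f x := by
        rw [intervalIntegral.integral_comp_add_left, add_zero]
    _ = _ := (intervalIntegral.integral_interval_sub_left (hf.intervalIntegrable _ _)
        (hf.intervalIntegrable _ _)).symm

lemma exists_hasDerivAt_addChar_zero [CompleteSpace A] {f : AddChar ℝ A} (hf : Continuous f) :
    ∃ N, HasDerivAt f N 0 := by
  obtain ⟨t, M, hM⟩ := exists_isUnit_intervalIntegral hf (by simp)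
  have hf_eq : ⇑f = fun s => ((∫ x in (0 : ℝ)..s + t, f x) - ∫ x in (0 : ℝ)..s, f x) *
      (M⁻¹ : Aˣ) := by
    funext s
    rw [← addChar_mul_intervalIntegral hf, ← hM, Units.mul_inv_cancel_right]
  have hF (s : ℝ) := (hf.integral_hasStrictDerivAt 0 s).hasDerivAt
  rw [hf_eq]
  exact ⟨_, (((hF (0 + t)).comp_add_const 0 t).sub (hF 0)).mul_const _⟩

lemma hasDerivAt_addChar {f : AddChar ℝ A} {N : A} (hN : HasDerivAt f N 0) (s : ℝ) :
    HasDerivAt f (f s * N) s := by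
  have hshift : HasDerivAt (fun x => f (x - s)) N s :=
    HasDerivAt.comp_sub_const s s (by rwa [sub_self])
  refine (hshift.const_mul (f s)).congr_of_eventuallyEq (.of_forall fun x => ?_)
  simp only [← AddChar.map_add_eq_mul, add_sub_cancel]

lemma addChar_eq_exp_smul [CompleteSpace A] {f : AddChar ℝ A} {N : A} (hN : HasDerivAt f N 0)
    (s : ℝ) : f s = NormedSpace.exp (s • N) := by
  have hexp_neg (t : ℝ) : HasDerivAt (fun t : ℝ => NormedSpace.exp (-t • N))
      (-(N * NormedSpace.exp (-t • N))) t := by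
    simpa [Function.comp_def] using
      (hasDerivAt_exp_smul_const' (𝕂 := ℝ) N (-t)).scomp t (hasDerivAt_neg t)
  have hderiv (t : ℝ) : HasDerivAt (fun t => f t * NormedSpace.exp (-t • N)) 0 t := by
    have hmul := (hasDerivAt_addChar hN t).mul (hexp_neg t)
    rwa [mul_neg, mul_assoc, add_neg_cancel] at hmul
  have hconst : f s * NormedSpace.exp (-s • N) = 1 := by
    simpa using is_const_of_deriv_eq_zero (fun t => (hderiv t).differentiableAt)
      (fun t => (hderiv t).deriv) s 0
  let : NormedAlgebra ℚ A := NormedAlgebra.restrictScalars ℚ ℝ A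
  rw [neg_smul] at hconst
  calc f s = f s * (NormedSpace.exp (-(s • N)) * NormedSpace.exp (s • N)) := by
        rw [← NormedSpace.exp_add_of_commute (Commute.refl (s • N)).neg_left, neg_add_cancel,
          NormedSpace.exp_zero, mul_one]
    _ = NormedSpace.exp (s • N) := by rw [← mul_assoc, hconst, one_mul]

lemma exists_eq_sum_range_pow_smul_of_conj [CompleteSpace A] {f : AddChar ℝ A}
    (hf : Continuous f) (c : Aˣ) {q : ℝ} (hq : 1 < q)
    (hconj : ∀ s, c * f s * (c⁻¹ : Aˣ) = f (q * s)) :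
    ∃ (d : ℕ) (a : ℕ → A), ∀ s, f s = ∑ i ∈ Finset.range d, s ^ i • a i := by
  obtain ⟨N, hN⟩ := exists_hasDerivAt_addChar_zero hf
  have hN_conj : c * N * (c⁻¹ : Aˣ) = q • N := by
    have hscale : HasDerivAt (fun s => f (q * s)) (q • N) 0 :=
      HasDerivAt.scomp 0 (by rwa [mul_zero]) (by simpa using (hasDerivAt_id (0 : ℝ)).const_mul q)
    simp only [← hconj] at hscale
    exact ((hN.const_mul _).mul_const _).unique hscale
  obtain ⟨d, hd⟩ := isNilpotent_of_conj_eq_smul c hq hN_conj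
  exact ⟨d, _, fun s => (addChar_eq_exp_smul hN s).trans (exp_smul_eq_sum_range hd s)⟩

end OneParameterGroups

section LaurentFamilies

variable {M : Type*} [AddCommGroup M] [Module ℝ M]

/-- A family of vectors indexed by `ℝˣ` is Laurent if it is the evaluation of a Laurent
polynomial with vector coefficients. -/
def IsLaurent (f : ℝˣ → M) : Prop :=
  ∃ (S : Finset ℤ) (a : ℤ → M), ∀ s, f s = ∑ i ∈ S, s ^ i • a i

lemma isLaurent_sum {ι : Type*} (S : Finset ι) (e : ι → ℤ) (a : ι → M) :
    IsLaurent fun s => ∑ k ∈ S, s ^ e k • a k := by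
  classical
  refine ⟨S.image e, fun i => ∑ k ∈ S with e k = i, a k, fun s => ?_⟩
  refine (Finset.sum_fiberwise_of_maps_to (fun k => Finset.mem_image_of_mem e) _).symm.trans ?_
  refine Finset.sum_congr rfl fun i _ => ?_
  rw [Finset.smul_sum]
  exact Finset.sum_congr rfl fun k hk => by rw [(Finset.mem_filter.1 hk).2]

lemma isLaurent_const (x : M) : IsLaurent fun _ => x := by
  simpa using isLaurent_sum {()} 0 fun _ => x

lemma IsLaurent.comp_inv {f : ℝˣ → M} (hf : IsLaurent f) : IsLaurent fun s => f s⁻¹ := by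
  obtain ⟨S, a, ha⟩ := hf
  simpa only [ha, _root_.inv_zpow'] using isLaurent_sum S (-·) a

lemma IsLaurent.mul {A : Type*} [Ring A] [Algebra ℝ A] {f g : ℝˣ → A} (hf : IsLaurent f)
    (hg : IsLaurent g) : IsLaurent fun s => f s * g s := by
  obtain ⟨S, a, ha⟩ := hf
  obtain ⟨T, b, hb⟩ := hg
  simpa only [ha, hb, Finset.sum_mul_sum, smul_mul_smul_comm, ← _root_.zpow_add,
    Finset.sum_product] using
    isLaurent_sum (S ×ˢ T) (fun k => k.1 + k.2) fun k => a k.1 * b k.2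

lemma zpowGroupHom_real_injective :
    Function.Injective fun i : ℤ => (Units.coeHom ℝ).comp (zpowGroupHom (α := ℝˣ) i) := by
  intro i j hij
  have htwo : (2 : ℝ) ^ i = 2 ^ j := by
    simpa using DFunLike.congr_fun hij (Units.mk0 2 two_ne_zero)
  exact zpow_right_injective₀ two_pos (by norm_num) htwo

lemma eq_zero_of_forall_sum_zpow_smul_eq_zero {S : Finset ℤ} {a : ℤ → M}
    (h : ∀ s : ℝˣ, ∑ i ∈ S, s ^ i • a i = 0) : ∀ i ∈ S, a i = 0 := by
  have hindep := (linearIndependent_monoidHom ℝˣ ℝ).comp _ zpowGroupHom_real_injective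
  intro i hi
  refine (Module.forall_dual_apply_eq_zero_iff ℝ _).1 fun φ => ?_
  refine linearIndependent_iff'.1 hindep S (fun i => φ (a i)) (funext fun s => ?_) i hi
  simpa [Units.smul_def, mul_comm] using congrArg φ (h s)

lemma coeff_mul_eq_zpow_smul_coeff {A : Type*} [Ring A] [Algebra ℝ A] {D : ℝˣ →* A}
    {S : Finset ℤ} {a : ℤ → A} (ha : ∀ s, D s = ∑ i ∈ S, s ^ i • a i) (t : ℝˣ) :
    ∀ i ∈ S, a i * D t = t ^ i • a i := by
  suffices ∀ i ∈ S, a i * D t - t ^ i • a i = 0 from fun i hi => sub_eq_zero.1 (this i hi)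
  refine eq_zero_of_forall_sum_zpow_smul_eq_zero fun s => ?_
  calc ∑ i ∈ S, s ^ i • (a i * D t - t ^ i • a i)
      = (∑ i ∈ S, s ^ i • a i) * D t - ∑ i ∈ S, (s * t) ^ i • a i := by
        simp only [smul_sub, Finset.sum_sub_distrib, Finset.sum_mul, smul_mul_assoc, smul_smul,
          mul_zpow]
    _ = 0 := by rw [← ha, ← ha, map_mul, sub_self]

end LaurentFamilies

section RecurrentlyBounded

variable {V : Type*} [NormedAddCommGroup V] [NormedSpace ℝ V] {v : V}

/-- The vector `v` is a limit of vectors `x k` whose images under `D (z k)` stay bounded, for some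
sequence of parameters `z k` tending to `0`. -/
def RecurrentlyBounded (D : ℝˣ → V →L[ℝ] V) (v : V) : Prop :=
  ∃ (C : ℝ) (z : ℕ → ℝˣ) (x : ℕ → V), Tendsto (fun k => (z k : ℝ)) atTop (𝓝 0) ∧
    Tendsto x atTop (𝓝 v) ∧ ∀ᶠ k in atTop, ‖D (z k) (x k)‖ ≤ C

lemma RecurrentlyBounded.coeff_apply_eq_zero {D : ℝˣ →* (V →L[ℝ] V)}
    (hv : RecurrentlyBounded D v) {S : Finset ℤ} {a : ℤ → V →L[ℝ] V}
    (ha : ∀ s, D s = ∑ i ∈ S, s ^ i • a i) {i : ℤ} (hi : i ∈ S) (hneg : i < 0) : a i v = 0 := by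
  obtain ⟨C, z, x, hz, hx, hC⟩ := hv
  obtain ⟨m, rfl⟩ : ∃ m : ℕ, i = -m := ⟨i.natAbs, by omega⟩
  have hbound : ∀ᶠ k in atTop, ‖a (-m) (x k)‖ ≤ |(z k : ℝ)| ^ m * (‖a (-m)‖ * C) := by
    filter_upwards [hC] with k hk
    have hcoeff : a (-m) = z k ^ (m : ℤ) • (a (-m) * D (z k)) := by
      rw [coeff_mul_eq_zpow_smul_coeff ha _ _ hi, smul_smul, ← _root_.zpow_add,
        add_neg_cancel, zpow_zero, one_smul]
    calc ‖a (-m) (x k)‖ = |(z k : ℝ)| ^ m * ‖a (-m) (D (z k) (x k))‖ := by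
          conv_lhs => rw [hcoeff]
          simp [Units.smul_def, norm_smul]
      _ ≤ |(z k : ℝ)| ^ m * (‖a (-m)‖ * C) := by
          gcongr
          exact (a (-m)).le_opNorm_of_le hk
  have hlim : Tendsto (fun k => |(z k : ℝ)| ^ m * (‖a (-m)‖ * C)) atTop (𝓝 0) := by
    have hm : m ≠ 0 := by omega
    simpa [hm] using (hz.abs.pow m).mul_const (‖a (-m)‖ * C)
  exact tendsto_nhds_unique (((a (-m)).continuous.tendsto v).comp hx)
    (squeeze_zero_norm' hbound hlim)

lemma apply_eq_self_of_recurrentlyBounded {D : ℝˣ →* (V →L[ℝ] V)} (hD : IsLaurent D)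
    (hv : RecurrentlyBounded D v) (hv_inv : RecurrentlyBounded (fun s => D s⁻¹) v) (t : ℝˣ) :
    D t v = v := by
  obtain ⟨S, a, ha⟩ := hD
  have ha_inv (s : ℝˣ) : D.comp invMonoidHom s = ∑ i ∈ S.map (Equiv.neg ℤ).toEmbedding,
      s ^ i • a (-i) := by
    simp [ha]
  have hcoeff : ∀ i ∈ S, i ≠ 0 → a i v = 0 := by
    intro i hi hi0
    rcases lt_or_gt_of_ne hi0 with hneg | hpos
    · exact hv.coeff_apply_eq_zero ha hi hneg
    · simpa using RecurrentlyBounded.coeff_apply_eq_zero (D := D.comp invMonoidHom) hv_inv ha_inv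
        (Finset.mem_map_of_mem _ hi) (neg_lt_zero.2 hpos)
  have hconst (s : ℝˣ) : D s v = ∑ i ∈ S, a i v := by
    simp only [ha, _root_.sum_apply, _root_.smul_apply]
    refine Finset.sum_congr rfl fun i hi => ?_
    by_cases hi0 : i = 0
    · rw [hi0, zpow_zero, one_smul]
    · rw [hcoeff i hi hi0, smul_zero]
  rw [hconst, ← hconst 1, map_one, one_apply_eq_self]

end RecurrentlyBounded

section IdentityComponents

variable {Γ : Type*} [Group Γ] [TopologicalSpace Γ] [IsTopologicalGroup Γ]

lemma connectedComponentIn_one_subset_of_mem_nhdsWithin {S H : Subgroup Γ}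
    (hH : (H : Set Γ) ∈ 𝓝[S] 1) : connectedComponentIn (S : Set Γ) 1 ⊆ H := by
  have hnhds : (H.subgroupOf S : Set S) ∈ 𝓝 1 :=
    preimage_coe_mem_nhds_subtype.2 hH
  have hopen : IsOpen (H.subgroupOf S : Set S) := Subgroup.isOpen_of_mem_nhds _ hnhds
  have hclopen : IsClopen (H.subgroupOf S : Set S) := ⟨Subgroup.isClosed_of_isOpen _ hopen, hopen⟩
  rw [connectedComponentIn_eq_image S.one_mem, Set.image_subset_iff]
  exact hclopen.connectedComponent_subset (one_mem _)

end IdentityComponents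

section Completion

variable {V : Type*} [NormedAddCommGroup V] [NormedSpace ℝ V]

/-- The extension of bounded operators on `V` to the completion of `V`. -/
def completionHom : (V →L[ℝ] V) →*
    (UniformSpace.Completion V →L[ℝ] UniformSpace.Completion V) where
  toFun f := f.completion
  map_one' := ContinuousLinearMap.ext fun x => by
    refine UniformSpace.Completion.induction_on x (isClosed_eq (map_continuous _)
      (map_continuous _)) fun a => ?_
    simp
  map_mul' f g := ContinuousLinearMap.ext fun x => by
    refine UniformSpace.Completion.induction_on x (isClosed_eq (map_continuous _)
      (map_continuous _)) fun a => ?_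
    simp

lemma completionHom_apply_coe (f : V →L[ℝ] V) (a : V) : completionHom f a = f a :=
  f.completion_apply_coe a

lemma continuous_completionHom : Continuous (completionHom (V := V)) := by
  refine (LipschitzWith.mk_one fun f g => ?_).continuous
  rw [dist_eq_norm, dist_eq_norm]
  refine ContinuousLinearMap.opNorm_le_bound _ (norm_nonneg _) fun x => ?_
  refine UniformSpace.Completion.induction_on x (isClosed_le (by fun_prop) (by fun_prop))
    fun a => ?_
  rw [_root_.sub_apply, completionHom_apply_coe, completionHom_apply_coe,
    ← UniformSpace.Completion.coe_sub, UniformSpace.Completion.norm_coe,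
    UniformSpace.Completion.norm_coe]
  exact (f - g).le_opNorm a

end Completion

lemma isCompact_orthogonalGroup (m : Type*) [Fintype m] [DecidableEq m] :
    IsCompact (Matrix.orthogonalGroup m ℝ : Set (Matrix m m ℝ)) := by
  have hbox : IsCompact (Set.univ.pi fun _ : m => Set.univ.pi fun _ : m => Set.Icc (-1 : ℝ) 1) :=
    isCompact_univ_pi fun _ => isCompact_univ_pi fun _ => isCompact_Icc
  have hclosed : IsClosed (Matrix.orthogonalGroup m ℝ : Set (Matrix m m ℝ)) :=
    isClosed_unitary (R := Matrix m m ℝ)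
  exact hbox.of_isClosed_subset hclosed fun g hg i _ j _ =>
    abs_le.1 (entry_norm_bound_of_unitary hg i j)

lemma tendsto_zero_of_tendsto_pow_zero {ι : Type*} {l : Filter ι} {z : ι → ℝ} {m : ℕ}
    (hm : m ≠ 0) (hz : Tendsto (fun k => z k ^ m) l (𝓝 0)) : Tendsto z l (𝓝 0) := by
  rw [← Asymptotics.isLittleO_one_iff ℝ] at hz ⊢
  exact Asymptotics.IsLittleO.of_pow (n := m) (by simpa [Pi.pow_def] using hz) hm

/-- The polar form `lorB`, bundled as a bilinear form. -/
def lorForm (n : ℕ) : LinearMap.BilinForm ℝ (Fin (n + 1) → ℝ) :=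
  LinearMap.mk₂ ℝ (lorB n)
    (fun x x' y => by
      simp only [lorB, Pi.add_apply, add_mul, ← Finset.sum_filter, Finset.sum_add_distrib]; ring)
    (fun c x y => by
      simp only [lorB, Pi.smul_apply, smul_eq_mul, mul_assoc, ← Finset.sum_filter, mul_add,
        Finset.mul_sum])
    (fun x y y' => by
      simp only [lorB, Pi.add_apply, mul_add, ← Finset.sum_filter, Finset.sum_add_distrib]; ring)
    (fun c x y => by
      simp only [lorB, Pi.smul_apply, smul_eq_mul, ← Finset.sum_filter, mul_add, Finset.mul_sum,
        mul_left_comm])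

local notation "⟪" x ", " y "⟫" => lorForm _ x y

section LorentzForm

variable {n : ℕ}

lemma lorForm_apply (x y : Fin (n + 1) → ℝ) : ⟪x, y⟫ = lorB n x y := rfl

lemma lorForm_comm (x y : Fin (n + 1) → ℝ) : ⟪x, y⟫ = ⟪y, x⟫ := by
  simp only [lorForm_apply, lorB, mul_comm, add_comm]

lemma lorQ_eq_lorForm (x : Fin (n + 1) → ℝ) : lorQ n x = ⟪x, x⟫ := by
  simp only [lorForm_apply, lorQ, lorB, pow_two]; ring

@[fun_prop]
lemma continuous_lorForm {X : Type*} [TopologicalSpace X] {f g : X → Fin (n + 1) → ℝ}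
    (hf : Continuous f) (hg : Continuous g) : Continuous fun t => ⟪f t, g t⟫ := by
  simp only [lorForm_apply, lorB, ← Finset.sum_filter]
  fun_prop

/-- The standard representation of `O(1,n)`, that is `lorAct` as a monoid homomorphism. -/
def lorRep (n : ℕ) : LorentzGrp n →* Module.End ℝ (Fin (n + 1) → ℝ) :=
  (Matrix.toLinAlgEquiv' (R := ℝ)).toMonoidHom.comp ((Units.coeHom _).comp (LorentzGrp n).subtype)

lemma lorRep_apply (g : LorentzGrp n) (x : Fin (n + 1) → ℝ) : lorRep n g x = lorAct g x := rfl

variable (g h : LorentzGrp n) (x y : Fin (n + 1) → ℝ)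

lemma lorRep_mul_apply : lorRep n (g * h) x = lorRep n g (lorRep n h x) := by
  rw [map_mul, Module.End.mul_apply]

lemma lorRep_inv_lorRep : lorRep n g⁻¹ (lorRep n g x) = x := by
  rw [← lorRep_mul_apply, inv_mul_cancel, map_one, Module.End.one_apply]

lemma lorRep_lorRep_inv : lorRep n g (lorRep n g⁻¹ x) = x := by
  rw [← lorRep_mul_apply, mul_inv_cancel, map_one, Module.End.one_apply]

lemma lorForm_lorRep : ⟪lorRep n g x, lorRep n g y⟫ = ⟪x, y⟫ := by
  have hq (z : Fin (n + 1) → ℝ) : ⟪lorRep n g z, lorRep n g z⟫ = ⟪z, z⟫ := by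
    rw [← lorQ_eq_lorForm, ← lorQ_eq_lorForm]
    exact g.2 z
  have hxy := hq (x + y)
  rw [map_add] at hxy
  simp only [map_add, LinearMap.add_apply, hq] at hxy
  linarith [lorForm_comm (lorRep n g x) (lorRep n g y), lorForm_comm x y]

lemma lorRep_injective : Function.Injective (lorRep n) := fun _ _ hgh =>
  Subtype.ext (Units.ext (Matrix.toLinAlgEquiv'.injective hgh))

lemma continuous_lorRep_apply : Continuous fun g => lorRep n g x :=
  (Units.continuous_val.comp continuous_subtype_val).matrix_mulVec continuous_const

lemma continuous_of_continuous_lorRep_apply {X : Type*} [TopologicalSpace X]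
    {f : X → LorentzGrp n} (hf : ∀ x, Continuous fun t => lorRep n (f t) x)
    (hf_inv : ∀ x, Continuous fun t => lorRep n (f t)⁻¹ x) : Continuous f := by
  have hentry (a : X → LorentzGrp n) (ha : ∀ x, Continuous fun t => lorRep n (a t) x) :
      Continuous fun t => ((a t : GL (Fin (n + 1)) ℝ) : Matrix (Fin (n + 1)) (Fin (n + 1)) ℝ) := by
    refine continuous_matrix fun i j => ?_
    simpa [lorRep_apply, lorAct, Function.comp_def] using
      (continuous_apply i).comp (ha (Pi.single j 1))
  exact (Units.continuous_iff.2 ⟨hentry f hf, hentry (fun t => (f t)⁻¹) hf_inv⟩).subtype_mk _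

/-- A group of linear isometries of `lorForm`, as a homomorphism to `O(1,n)`. -/
def lorHom {Γ : Type*} [Group Γ] (Φ : Γ →* Module.End ℝ (Fin (n + 1) → ℝ))
    (hΦ : ∀ c x, ⟪Φ c x, Φ c x⟫ = ⟪x, x⟫) : Γ →* LorentzGrp n :=
  ((Units.map (LinearMap.toMatrixAlgEquiv' (R := ℝ)).toMonoidHom).comp Φ.toHomUnits).codRestrict
    (LorentzGrp n) fun c x => by
      have hc : ((LinearMap.toMatrixAlgEquiv' (Φ c)).mulVec x) = Φ c x :=
        LinearMap.toMatrix'_mulVec (Φ c) x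
      rw [lorQ_eq_lorForm, lorQ_eq_lorForm, ← hΦ c x, ← hc]
      rfl

lemma lorRep_lorHom {Γ : Type*} [Group Γ] {Φ : Γ →* Module.End ℝ (Fin (n + 1) → ℝ)}
    (hΦ : ∀ c x, ⟪Φ c x, Φ c x⟫ = ⟪x, x⟫) (c : Γ) : lorRep n (lorHom Φ hΦ c) = Φ c :=
  Matrix.toLinAlgEquiv'_toMatrixAlgEquiv' (Φ c)

end LorentzForm

section HyperbolicPairs

variable {n : ℕ} {p r w : Fin (n + 1) → ℝ}

/-- A pair of null vectors with product `1`, that is, a normalised basis of a hyperbolic plane. -/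
structure HyperbolicPair (p r : Fin (n + 1) → ℝ) : Prop where
  left_null : ⟪p, p⟫ = 0
  right_null : ⟪r, r⟫ = 0
  left_right : ⟪p, r⟫ = 1

/-- A hyperbolic pair together with an orthogonal vector `w`. The normalisation `⟪w, w⟫ = 2` makes
the unipotent element attached to `p` send `r` to `r + w - p`. -/
structure HyperbolicFrame (p r w : Fin (n + 1) → ℝ) : Prop extends HyperbolicPair p r where
  left_third : ⟪p, w⟫ = 0
  right_third : ⟪r, w⟫ = 0
  third_self : ⟪w, w⟫ = 2

namespace HyperbolicPair

lemma symm (h : HyperbolicPair p r) : HyperbolicPair r p where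
  left_null := h.right_null
  right_null := h.left_null
  left_right := (lorForm_comm r p).trans h.left_right

lemma map (h : HyperbolicPair p r) (g : LorentzGrp n) :
    HyperbolicPair (lorRep n g p) (lorRep n g r) where
  left_null := (lorForm_lorRep g p p).trans h.left_null
  right_null := (lorForm_lorRep g r r).trans h.right_null
  left_right := (lorForm_lorRep g p r).trans h.left_right

end HyperbolicPair

namespace HyperbolicFrame

lemma swap (h : HyperbolicFrame p r w) : HyperbolicFrame r p w where
  toHyperbolicPair := h.symm
  left_third := h.right_third
  right_third := h.left_third
  third_self := h.third_self

lemma map (h : HyperbolicFrame p r w) (g : LorentzGrp n) :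
    HyperbolicFrame (lorRep n g p) (lorRep n g r) (lorRep n g w) where
  toHyperbolicPair := h.toHyperbolicPair.map g
  left_third := (lorForm_lorRep g p w).trans h.left_third
  right_third := (lorForm_lorRep g r w).trans h.right_third
  third_self := (lorForm_lorRep g w w).trans h.third_self

end HyperbolicFrame

end HyperbolicPairs

section Boosts

variable {n : ℕ} {p r : Fin (n + 1) → ℝ}

/-- The boost of the plane spanned by a hyperbolic pair `(p, r)`: it multiplies `p` by `c` and
`r` by `c⁻¹`, and fixes the orthogonal complement of the plane. -/
def boost (h : HyperbolicPair p r) : ℝˣ →* LorentzGrp n :=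
  lorHom
    { toFun := fun c => 1 + ((c : ℝ) - 1) • (lorForm n r).smulRight p +
        (((c⁻¹ : ℝˣ) : ℝ) - 1) • (lorForm n p).smulRight r
      map_one' := by simp
      map_mul' := fun c d => by
        refine LinearMap.ext fun y => ?_
        simp only [Units.val_mul, _root_.mul_inv_rev, LinearMap.add_apply, Module.End.one_apply,
          LinearMap.smul_apply, LinearMap.coe_smulRight, Module.End.mul_apply, map_add, map_smul,
          h.left_null, h.right_null, h.left_right, h.symm.left_right]
        match_scalars <;> ring }
    fun c y => by
      simp only [Units.val_inv_eq_inv_val, MonoidHom.coe_mk, OneHom.coe_mk, LinearMap.add_apply,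
        Module.End.one_apply, LinearMap.smul_apply, LinearMap.coe_smulRight, map_add, map_smul,
        smul_eq_mul, lorForm_comm y, h.left_null, h.right_null, h.left_right, h.symm.left_right,
        mul_zero, mul_one, add_zero]
      field_simp
      ring

lemma boost_apply (h : HyperbolicPair p r) (c : ℝˣ) (y : Fin (n + 1) → ℝ) :
    lorRep n (boost h c) y =
      y + (((c : ℝ) - 1) * ⟪r, y⟫) • p + ((((c⁻¹ : ℝˣ) : ℝ) - 1) * ⟪p, y⟫) • r := by
  rw [boost, lorRep_lorHom]
  simp [smul_smul]

lemma boost_left (h : HyperbolicPair p r) (c : ℝˣ) : lorRep n (boost h c) p = (c : ℝ) • p := by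
  rw [boost_apply, h.left_null, h.symm.left_right]
  module

lemma boost_right (h : HyperbolicPair p r) (c : ℝˣ) :
    lorRep n (boost h c) r = ((c⁻¹ : ℝˣ) : ℝ) • r := by
  rw [boost_apply, h.right_null, h.left_right]
  module

lemma boost_orthogonal (h : HyperbolicPair p r) (c : ℝˣ) {y : Fin (n + 1) → ℝ} (hp : ⟪p, y⟫ = 0)
    (hr : ⟪r, y⟫ = 0) : lorRep n (boost h c) y = y := by
  rw [boost_apply, hp, hr]
  module

lemma boost_symm (h : HyperbolicPair p r) (c : ℝˣ) : boost h.symm c = boost h c⁻¹ := by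
  refine lorRep_injective (LinearMap.ext fun y => ?_)
  rw [boost_apply, boost_apply, inv_inv, add_right_comm]

lemma conj_boost (h : HyperbolicPair p r) (g : LorentzGrp n) (c : ℝˣ) :
    g * boost h c * g⁻¹ = boost (h.map g) c := by
  refine lorRep_injective (LinearMap.ext fun y => ?_)
  rw [lorRep_mul_apply, lorRep_mul_apply, boost_apply, boost_apply]
  simp only [map_add, map_smul, lorRep_lorRep_inv, ← lorForm_lorRep g _ (lorRep n g⁻¹ y)]

end Boosts

section Unipotents

variable {n : ℕ} {p r w : Fin (n + 1) → ℝ}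

/-- The Eichler transformations attached to a null vector `p`: unipotent isometries fixing `p`,
parametrised by the vectors orthogonal to `p`. -/
def eichler (hp : ⟪p, p⟫ = 0) : AddChar (LinearMap.ker (lorForm n p)) (LorentzGrp n) :=
  AddChar.toMonoidHomEquiv.symm <| lorHom
    { toFun := fun x => 1 + (lorForm n p).smulRight (x.toAdd : Fin (n + 1) → ℝ) -
        (lorForm n (x.toAdd : Fin (n + 1) → ℝ)).smulRight p -
        (⟪(x.toAdd : Fin (n + 1) → ℝ), x.toAdd⟫ / 2) • (lorForm n p).smulRight p
      map_one' := by simp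
      map_mul' := fun x x' => by
        have hx : ⟪p, (x.toAdd : Fin (n + 1) → ℝ)⟫ = 0 := x.toAdd.2
        have hx' : ⟪p, (x'.toAdd : Fin (n + 1) → ℝ)⟫ = 0 := x'.toAdd.2
        refine LinearMap.ext fun y => ?_
        simp only [toAdd_mul, Submodule.coe_add, map_add, map_sub, map_smul, LinearMap.add_apply,
          LinearMap.sub_apply, LinearMap.smul_apply, LinearMap.coe_smulRight, Module.End.one_apply,
          Module.End.mul_apply, smul_add, hp, hx, hx', lorForm_comm _ p,
          lorForm_comm (x'.toAdd : Fin (n + 1) → ℝ) x.toAdd]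
        module }
    fun x y => by
      have hx : ⟪p, (x.toAdd : Fin (n + 1) → ℝ)⟫ = 0 := x.toAdd.2
      simp only [MonoidHom.coe_mk, OneHom.coe_mk, LinearMap.sub_apply, LinearMap.add_apply,
        Module.End.one_apply, LinearMap.coe_smulRight, LinearMap.smul_apply, map_sub, map_add,
        map_smul, smul_eq_mul, hp, hx, lorForm_comm _ p, lorForm_comm y, mul_zero, sub_zero,
        add_zero]
      ring

lemma eichler_apply (hp : ⟪p, p⟫ = 0) {x : Fin (n + 1) → ℝ} (hx : ⟪p, x⟫ = 0)
    (y : Fin (n + 1) → ℝ) :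
    lorRep n (eichler hp ⟨x, hx⟩) y =
      y + ⟪p, y⟫ • x - (⟪x, y⟫ + ⟪x, x⟫ / 2 * ⟪p, y⟫) • p := by
  rw [eichler, AddChar.toMonoidHomEquiv_symm_apply, lorRep_lorHom]
  simp
  module

lemma continuous_eichler (hp : ⟪p, p⟫ = 0) : Continuous (eichler hp) := by
  have hval (y : Fin (n + 1) → ℝ) : Continuous fun x => lorRep n (eichler hp x) y := by
    refine Continuous.congr ?_ fun x => (eichler_apply hp x.2 y).symm
    fun_prop
  refine continuous_of_continuous_lorRep_apply hval fun y => ?_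
  simp only [← AddChar.map_neg_eq_inv]
  exact (hval y).comp continuous_neg

namespace HyperbolicFrame

/-- The unipotent one-parameter group of a hyperbolic frame, which fixes `p`. -/
def unip (h : HyperbolicFrame p r w) : AddChar ℝ (LorentzGrp n) :=
  (eichler h.left_null).compAddMonoidHom
    (LinearMap.toSpanSingleton ℝ (LinearMap.ker (lorForm n p)) ⟨w, h.left_third⟩).toAddMonoidHom

lemma continuous_unip (h : HyperbolicFrame p r w) : Continuous h.unip :=
  (continuous_eichler h.left_null).comp (continuous_id.smul continuous_const)

lemma unip_apply (h : HyperbolicFrame p r w) (s : ℝ) (y : Fin (n + 1) → ℝ) :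
    lorRep n (h.unip s) y = y + (s * ⟪p, y⟫) • w - (s * ⟪w, y⟫ + s ^ 2 * ⟪p, y⟫) • p := by
  have hsw : ⟪p, s • w⟫ = 0 := by rw [map_smul, h.left_third, smul_zero]
  refine (eichler_apply h.left_null hsw y).trans ?_
  simp only [map_smul, LinearMap.smul_apply, smul_eq_mul, h.third_self]
  module

lemma unip_left (h : HyperbolicFrame p r w) (s : ℝ) : lorRep n (h.unip s) p = p := by
  rw [unip_apply, h.left_null, lorForm_comm w, h.left_third]
  module

lemma unip_right (h : HyperbolicFrame p r w) (s : ℝ) :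
    lorRep n (h.unip s) r = r + s • w - s ^ 2 • p := by
  rw [unip_apply, h.left_right, lorForm_comm w, h.right_third]
  module

lemma unip_third (h : HyperbolicFrame p r w) (s : ℝ) :
    lorRep n (h.unip s) w = w - (2 * s) • p := by
  rw [unip_apply, h.left_third, h.third_self]
  module

lemma unip_orthogonal (h : HyperbolicFrame p r w) (s : ℝ) {y : Fin (n + 1) → ℝ}
    (hp : ⟪p, y⟫ = 0) (hw : ⟪w, y⟫ = 0) : lorRep n (h.unip s) y = y := by
  rw [unip_apply, hp, hw]
  module

lemma exists_eq_add_orthogonal (h : HyperbolicFrame p r w) (x : Fin (n + 1) → ℝ) :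
    ∃ y, ⟪p, y⟫ = 0 ∧ ⟪r, y⟫ = 0 ∧ ⟪w, y⟫ = 0 ∧
      x = ⟪r, x⟫ • p + ⟪p, x⟫ • r + (⟪w, x⟫ / 2) • w + y :=
  ⟨x - (⟪r, x⟫ • p + ⟪p, x⟫ • r + (⟪w, x⟫ / 2) • w),
    by simp [h.left_null, h.left_right, h.left_third],
    by simp [h.right_null, h.symm.left_right, h.right_third],
    by simp [h.third_self, lorForm_comm w p, lorForm_comm w r, h.left_third, h.right_third],
    (add_sub_cancel _ x).symm⟩

lemma lorRep_ext (h : HyperbolicFrame p r w) {a b : LorentzGrp n}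
    (hp : lorRep n a p = lorRep n b p) (hr : lorRep n a r = lorRep n b r)
    (hw : lorRep n a w = lorRep n b w)
    (horth : ∀ y, ⟪p, y⟫ = 0 → ⟪r, y⟫ = 0 → ⟪w, y⟫ = 0 → lorRep n a y = lorRep n b y) :
    a = b := by
  refine lorRep_injective (LinearMap.ext fun x => ?_)
  obtain ⟨y, hpy, hry, hwy, hxy⟩ := h.exists_eq_add_orthogonal x
  rw [hxy]
  simp only [map_add, map_smul, hp, hr, hw, horth y hpy hry hwy]

lemma boost_conj_unip (h : HyperbolicFrame p r w) (c : ℝˣ) (s : ℝ) :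
    boost h.toHyperbolicPair c * h.unip s * (boost h.toHyperbolicPair c)⁻¹ = h.unip (c * s) := by
  rw [mul_inv_eq_iff_eq_mul]
  refine h.lorRep_ext ?_ ?_ ?_ fun y hp hr hw => ?_ <;>
    simp only [lorRep_mul_apply, boost_left, boost_right, unip_left, unip_right, unip_third,
      map_add, map_sub, map_smul, boost_orthogonal _ c h.left_third h.right_third]
  · match_scalars <;> field_simp
  · module
  · rw [h.unip_orthogonal s hp hw, boost_orthogonal _ c hp hr, h.unip_orthogonal _ hp hw]

/-- The analogue of Steinberg's relation `h(s) = w(s) w(-1)` in `SL₂`, where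
`w(s) = x(s) y(-s⁻¹) x(s)`. -/
lemma boost_sq_eq_unip_mul (h : HyperbolicFrame p r w) (s : ℝˣ) :
    boost h.toHyperbolicPair (s ^ 2) =
      h.unip s * h.swap.unip (s⁻¹ : ℝˣ) * h.unip s * (h.unip 1 * h.swap.unip 1 * h.unip 1) := by
  refine h.lorRep_ext ?_ ?_ ?_ fun y hp hr hw => ?_ <;>
    simp only [lorRep_mul_apply, boost_left, boost_right, unip_left, unip_right, unip_third,
      map_add, map_sub, map_smul, h.swap.unip_left, h.swap.unip_right, h.swap.unip_third]
  · match_scalars <;> simp <;> field_simp <;> ring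
  · match_scalars <;> simp <;> field_simp <;> ring
  · rw [boost_orthogonal _ _ h.left_third h.right_third]
    match_scalars <;> simp <;> field_simp <;> ring
  · simp only [h.unip_orthogonal _ hp hw, h.swap.unip_orthogonal _ hr hw,
      boost_orthogonal _ _ hp hr]

end HyperbolicFrame

end Unipotents

section BasePoint

variable {n : ℕ}

lemma ne_zero_of_lorForm_self_eq_zero {x : Fin (n + 1) → ℝ} (hx : ⟪x, x⟫ = 0) (hx0 : x ≠ 0) :
    n ≠ 0 := by
  rintro rfl
  refine hx0 (funext fun i => ?_)
  have h00 : x 0 * x 0 + x 0 * x 0 = 0 := by simpa [lorForm_apply, lorB] using hx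
  rw [Fin.fin_one_eq_zero i, Pi.zero_apply]
  exact mul_self_eq_zero.1 (by linarith)

lemma lorForm_basePt (hn : n ≠ 0) (x : Fin (n + 1) → ℝ) :
    ⟪basePt n, x⟫ = x (Fin.last n) - x 0 := by
  have hlast : Fin.last n ≠ 0 := mt Fin.last_eq_zero_iff.1 hn
  have hsum : ∑ i : Fin (n + 1), (if i ≠ 0 ∧ i ≠ Fin.last n then basePt n i * x i else 0) = 0 :=
    Finset.sum_eq_zero fun i _ => by
      split_ifs with hi
      · rw [basePt, if_neg hi.1, if_neg hi.2, zero_mul]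
      · rfl
  rw [lorForm_apply, lorB, hsum]
  simp only [basePt, ↓reduceIte, one_mul, hlast, neg_mul, add_zero]
  ring

lemma lorForm_add_basePt_mul_basePt (hn : n ≠ 0) (x y : Fin (n + 1) → ℝ) :
    ⟪x, y⟫ + ⟪basePt n, x⟫ * ⟪basePt n, y⟫ = x ⬝ᵥ y := by
  have hlast : Fin.last n ≠ 0 := mt Fin.last_eq_zero_iff.1 hn
  have hsplit : x ⬝ᵥ y = x 0 * y 0 + (x (Fin.last n) * y (Fin.last n) +
      ∑ i : Fin (n + 1), if i ≠ 0 ∧ i ≠ Fin.last n then x i * y i else 0) := by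
    rw [← Finset.sum_filter, Finset.filter_and, Finset.filter_ne', Finset.filter_ne',
      Finset.inter_erase, Finset.inter_univ, dotProduct,
      ← Finset.add_sum_erase _ _ (Finset.mem_univ 0),
      ← Finset.add_sum_erase _ _ (Finset.mem_erase.2 ⟨hlast, Finset.mem_univ _⟩)]
  rw [hsplit, lorForm_basePt hn, lorForm_basePt hn, lorForm_apply, lorB]
  ring

lemma lorForm_basePt_self (hn : n ≠ 0) : ⟪basePt n, basePt n⟫ = -2 := by
  have hlast : Fin.last n ≠ 0 := mt Fin.last_eq_zero_iff.1 hn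
  rw [lorForm_basePt hn]
  norm_num [basePt, hlast]

lemma lorForm_basePt_ne_zero {x : Fin (n + 1) → ℝ} (hx : ⟪x, x⟫ = 0) (hx0 : x ≠ 0) :
    ⟪basePt n, x⟫ ≠ 0 := fun h => hx0 <| dotProduct_self_eq_zero.1 <| by
  rw [← lorForm_add_basePt_mul_basePt (ne_zero_of_lorForm_self_eq_zero hx hx0), hx, h]
  ring

lemma isClosed_lorentzGrp : IsClosed (LorentzGrp n : Set (GL (Fin (n + 1)) ℝ)) := by
  have h_inter : (LorentzGrp n : Set (GL (Fin (n + 1)) ℝ)) =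
      ⋂ x, {g : GL (Fin (n + 1)) ℝ |
        lorQ n ((g : Matrix (Fin (n + 1)) (Fin (n + 1)) ℝ).mulVec x) = lorQ n x} := by
    ext g
    simp only [Set.mem_iInter]
    rfl
  rw [h_inter]
  refine isClosed_iInter fun x => isClosed_eq ?_ continuous_const
  have hmulVec : Continuous fun g : GL (Fin (n + 1)) ℝ =>
      (g : Matrix (Fin (n + 1)) (Fin (n + 1)) ℝ).mulVec x :=
    Units.continuous_val.matrix_mulVec continuous_const
  simp only [lorQ_eq_lorForm]
  exact continuous_lorForm hmulVec hmulVec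

lemma mem_orthogonalGroup_of_lorRep_basePt (hn : n ≠ 0) {g : LorentzGrp n}
    (hg : lorRep n g (basePt n) = basePt n) :
    ((g : GL (Fin (n + 1)) ℝ) : Matrix (Fin (n + 1)) (Fin (n + 1)) ℝ) ∈
      Matrix.orthogonalGroup (Fin (n + 1)) ℝ := by
  have hbase (x : Fin (n + 1) → ℝ) : ⟪basePt n, lorRep n g x⟫ = ⟪basePt n, x⟫ := by
    conv_lhs => rw [← hg, lorForm_lorRep]
  have hdot (x y : Fin (n + 1) → ℝ) : lorRep n g x ⬝ᵥ lorRep n g y = x ⬝ᵥ y := by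
    simp only [← lorForm_add_basePt_mul_basePt hn, lorForm_lorRep, hbase]
  refine (Matrix.mem_orthogonalGroup_iff' _ _).2 (Matrix.ext fun i j => ?_)
  simpa [lorRep_apply, lorAct, Matrix.mul_apply, dotProduct, Matrix.one_apply, Pi.single_apply,
    eq_comm] using hdot (Pi.single i 1) (Pi.single j 1)

lemma isCompact_stabilizer_basePt (hn : n ≠ 0) :
    IsCompact {g : LorentzGrp n | lorRep n g (basePt n) = basePt n} := by
  refine (isClosed_lorentzGrp.isClosedEmbedding_subtypeVal.isCompact_preimage
    (Submonoid.units_isCompact (isCompact_orthogonalGroup (Fin (n + 1))))).of_isClosed_subset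
    (isClosed_eq (continuous_lorRep_apply _) continuous_const)
    fun g (hg : lorRep n g (basePt n) = basePt n) => ?_
  have hg_inv : lorRep n g⁻¹ (basePt n) = basePt n := by
    conv_lhs => rw [← hg, lorRep_inv_lorRep]
  exact (Submonoid.mem_units_iff _ _).2 ⟨mem_orthogonalGroup_of_lorRep_basePt hn hg,
    mem_orthogonalGroup_of_lorRep_basePt hn hg_inv⟩

lemma isCompact_setOf_lorRep_basePt_eq (hn : n ≠ 0) (z : Fin (n + 1) → ℝ) :
    IsCompact {g : LorentzGrp n | lorRep n g (basePt n) = z} := by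
  rcases Set.eq_empty_or_nonempty {g : LorentzGrp n | lorRep n g (basePt n) = z} with
    hempty | ⟨g₀, rfl⟩
  · rw [hempty]
    exact isCompact_empty
  · refine (isCompact_stabilizer_basePt hn).image (continuous_const_mul g₀) |>.of_isClosed_subset
      (isClosed_eq (continuous_lorRep_apply _) continuous_const)
      fun g (hg : lorRep n g (basePt n) = lorRep n g₀ (basePt n)) => ?_
    refine ⟨g₀⁻¹ * g, ?_, mul_inv_cancel_left g₀ g⟩
    rw [Set.mem_ofPred_eq, lorRep_mul_apply, hg, lorRep_inv_lorRep]

end BasePoint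

section LimitDynamics

variable {n : ℕ} {p r : Fin (n + 1) → ℝ}

namespace HyperbolicPair

lemma ne_zero (h : HyperbolicPair p r) : n ≠ 0 := by
  refine ne_zero_of_lorForm_self_eq_zero h.left_null ?_
  rintro rfl
  simpa using h.left_right

lemma eichler_param_orthogonal (h : HyperbolicPair p r) {y : Fin (n + 1) → ℝ}
    (hy : ⟪r, y⟫ = 1) : ⟪r, p + ⟪p, y⟫ • r - y⟫ = 0 := by
  simp [h.symm.left_right, h.right_null, hy]

lemma lorRep_eichler_param (h : HyperbolicPair p r) {y : Fin (n + 1) → ℝ} (hy : ⟪r, y⟫ = 1) :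
    lorRep n (eichler h.right_null ⟨_, h.eichler_param_orthogonal hy⟩) y =
      p + (⟪y, y⟫ / 2) • r := by
  rw [eichler_apply]
  simp only [map_sub, map_add, map_smul, LinearMap.sub_apply, LinearMap.add_apply,
    LinearMap.smul_apply, smul_eq_mul, h.left_null, h.right_null, h.left_right,
    h.symm.left_right, hy, lorForm_comm y p, lorForm_comm y r]
  module

lemma boost_sq_eichler_param (h : HyperbolicPair p r) {y : Fin (n + 1) → ℝ} (hy : ⟪r, y⟫ = 1)
    {z : ℝˣ} (hz : ⟪y, y⟫ = -2 * (z : ℝ) ^ 4) :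
    lorRep n (boost h (z ^ 2) * eichler h.right_null ⟨_, h.eichler_param_orthogonal hy⟩) y =
      (z : ℝ) ^ 2 • (p - r) := by
  rw [lorRep_mul_apply, lorRep_eichler_param h hy, map_add, map_smul, boost_left, boost_right, hz,
    Units.val_inv_eq_inv_val, Units.val_pow_eq_pow_val]
  match_scalars <;> field_simp

end HyperbolicPair

variable {G : Set (LorentzGrp n)}

lemma IsLimitDirection.exists_tendsto_normalized (hp : IsLimitDirection n G p)
    (h : HyperbolicPair p r) :
    ∃ g : ℕ → LorentzGrp n, (∀ k, g k ∈ G) ∧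
      Tendsto (fun k => ⟪r, lorRep n (g k)⁻¹ (basePt n)⟫⁻¹ • lorRep n (g k)⁻¹ (basePt n))
        atTop (𝓝 p) := by
  obtain ⟨-, -, g, lam, hg, hlim⟩ := hp
  simp only [← lorRep_apply] at hlim
  refine ⟨g, hg, ?_⟩
  have hcoord : Tendsto (fun k => lam k * ⟪r, lorRep n (g k)⁻¹ (basePt n)⟫) atTop (𝓝 1) := by
    have hcont : Continuous fun x => ⟪r, x⟫ := by fun_prop
    simpa [h.symm.left_right, Function.comp_def] using (hcont.tendsto p).comp hlim
  have hquot := (hcoord.inv₀ one_ne_zero).smul hlim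
  rw [inv_one, one_smul] at hquot
  refine hquot.congr' ?_
  filter_upwards [hcoord.eventually_ne one_ne_zero] with k hk
  rw [smul_smul, mul_inv, mul_right_comm, inv_mul_cancel₀ (left_ne_zero_of_mul hk), one_mul]

lemma lorForm_lorRep_basePt_ne_zero (h : HyperbolicPair p r) (g : LorentzGrp n) :
    ⟪r, lorRep n g (basePt n)⟫ ≠ 0 := by
  have h_inv := h.map g⁻¹
  rw [lorForm_comm, ← lorForm_lorRep g⁻¹, lorRep_inv_lorRep]
  refine lorForm_basePt_ne_zero h_inv.right_null fun h0 => ?_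
  simpa [h0] using h_inv.left_right

lemma IsLimitDirection.exists_tendsto_unit_scaling (hp : IsLimitDirection n G p)
    (h : HyperbolicPair p r) :
    ∃ (g : ℕ → LorentzGrp n) (z : ℕ → ℝˣ) (y : ℕ → Fin (n + 1) → ℝ), (∀ k, g k ∈ G) ∧
      Tendsto (fun k => (z k : ℝ)) atTop (𝓝 0) ∧ Tendsto y atTop (𝓝 p) ∧
      (∀ k, ⟪r, y k⟫ = 1) ∧ (∀ k, ⟪y k, y k⟫ = -2 * (z k : ℝ) ^ 4) ∧
      ∀ k, (z k : ℝ) ^ 2 • lorRep n (g k)⁻¹ (basePt n) = y k ∨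
        (z k : ℝ) ^ 2 • lorRep n (g k)⁻¹ (basePt n) = -y k := by
  obtain ⟨g, hg, hlim⟩ := hp.exists_tendsto_normalized h
  have hcoord (k : ℕ) := lorForm_lorRep_basePt_ne_zero h (g k)⁻¹
  set u := fun k => lorRep n (g k)⁻¹ (basePt n)
  have hroot (k : ℕ) : 0 < √|⟪r, u k⟫⁻¹| := Real.sqrt_pos.2 (abs_pos.2 (inv_ne_zero (hcoord k)))
  set z : ℕ → ℝˣ := fun k => Units.mk0 (√|⟪r, u k⟫⁻¹|) (hroot k).ne'
  have hz_sq (k : ℕ) : (z k : ℝ) ^ 2 = |⟪r, u k⟫⁻¹| := Real.sq_sqrt (abs_nonneg _)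
  have hself (k : ℕ) : ⟪⟪r, u k⟫⁻¹ • u k, ⟪r, u k⟫⁻¹ • u k⟫ = -2 * (z k : ℝ) ^ 4 := by
    have hz_four : (z k : ℝ) ^ 4 = (⟪r, u k⟫⁻¹) ^ 2 := by
      rw [← sq_abs, ← hz_sq, ← pow_mul]
    rw [map_smul, map_smul, LinearMap.smul_apply, lorForm_lorRep, lorForm_basePt_self h.ne_zero,
      hz_four, smul_eq_mul, smul_eq_mul]
    ring
  refine ⟨g, z, fun k => ⟪r, u k⟫⁻¹ • u k, hg, ?_, hlim, fun k => ?_, hself, fun k => ?_⟩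
  · refine tendsto_zero_of_tendsto_pow_zero four_ne_zero ?_
    have hcont : Continuous fun x : Fin (n + 1) → ℝ => ⟪x, x⟫ := by fun_prop
    have hself_lim := ((hcont.tendsto p).comp hlim).mul_const (-1 / 2)
    rw [h.left_null, zero_mul] at hself_lim
    refine hself_lim.congr fun k => ?_
    rw [Function.comp_apply, hself]
    ring
  · rw [map_smul, smul_eq_mul, inv_mul_cancel₀ (hcoord k)]
  · rw [hz_sq]
    exact (abs_choice _).imp (by rintro h; rw [h]) (by rintro h; rw [h, neg_smul])

variable {V : Type*} [NormedAddCommGroup V] [NormedSpace ℝ V]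
  {ρ : LorentzGrp n →* (V →L[ℝ] V)} {v : V}

lemma exists_norm_le_of_lorRep_basePt_eq_or (hρ : Continuous ρ) (hn : n ≠ 0)
    (z : Fin (n + 1) → ℝ) :
    ∃ C, ∀ g, lorRep n g (basePt n) = z ∨ lorRep n g (basePt n) = -z → ‖ρ g‖ ≤ C := by
  obtain ⟨C, hC⟩ := (((isCompact_setOf_lorRep_basePt_eq hn z).union
    (isCompact_setOf_lorRep_basePt_eq hn (-z))).image hρ).isBounded.exists_norm_le
  exact ⟨C, fun g hg => hC _ (Set.mem_image_of_mem ρ hg)⟩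

lemma recurrentlyBounded_boost_sq (hρ : Continuous ρ) (hv : IsStableVec ρ G v)
    (hp : IsLimitDirection n G p) (h : HyperbolicPair p r) :
    RecurrentlyBounded (fun s => ρ (boost h (s ^ 2))) v := by
  obtain ⟨g, z, y, hg, hz, hy, hry, hyy, hgy⟩ := hp.exists_tendsto_unit_scaling h
  obtain ⟨R, hR⟩ := hv.exists_norm_le
  obtain ⟨C, hC⟩ := exists_norm_le_of_lorRep_basePt_eq_or hρ h.ne_zero (p - r)
  set m := fun k => eichler h.right_null ⟨_, h.eichler_param_orthogonal (hry k)⟩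
  refine ⟨C * R, z, fun k => ρ (m k) v, hz, ?_, .of_forall fun k => ?_⟩
  · have hcont : Continuous fun x => p + ⟪p, x⟫ • r - x := by fun_prop
    have hparam : Tendsto (fun k => p + ⟪p, y k⟫ • r - y k) atTop (𝓝 0) := by
      simpa [h.left_null, Function.comp_def] using (hcont.tendsto p).comp hy
    have hm : Tendsto m atTop (𝓝 1) := by
      rw [← (eichler h.right_null).map_zero_eq_one]
      exact ((continuous_eichler h.right_null).tendsto 0).comp (tendsto_subtype_rng.2 hparam)
    simpa [Function.comp_def] using ((hρ.clm_apply continuous_const).tendsto 1).comp hm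
  · have hbase : lorRep n (boost h (z k ^ 2) * m k * (g k)⁻¹) (basePt n) = p - r ∨
        lorRep n (boost h (z k ^ 2) * m k * (g k)⁻¹) (basePt n) = -(p - r) := by
      have hz0 : (z k : ℝ) ^ 2 ≠ 0 := pow_ne_zero 2 (z k).ne_zero
      have himage := h.boost_sq_eichler_param (hry k) (hyy k)
      refine (hgy k).imp (fun hk => ?_) fun hk => ?_ <;>
      · refine smul_right_injective _ hz0 ?_
        simp only [lorRep_mul_apply _ (g k)⁻¹, ← map_smul, hk, map_neg, himage, smul_neg, m]
    calc ‖ρ (boost h (z k ^ 2)) (ρ (m k) v)‖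
        = ‖ρ (boost h (z k ^ 2) * m k * (g k)⁻¹) (ρ (g k) v)‖ := by
          simp only [← mul_apply_eq_comp, ← map_mul, inv_mul_cancel_right]
      _ ≤ C * R := ContinuousLinearMap.le_of_opNorm_le_of_le _ (hC _ hbase) (hR _ ⟨g k, hg k, rfl⟩)

end LimitDynamics

section BoostsFixStableVectors

variable {n : ℕ} {p r w : Fin (n + 1) → ℝ} {V : Type*} [NormedAddCommGroup V] [NormedSpace ℝ V]
  {ρ : LorentzGrp n →* (V →L[ℝ] V)} {G : Set (LorentzGrp n)} {v : V}

lemma isLaurent_unip [CompleteSpace V] (hρ : Continuous ρ) (h : HyperbolicFrame p r w) :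
    IsLaurent fun s : ℝˣ => ρ (h.unip s) := by
  let c := ρ.toHomUnits (boost h.toHyperbolicPair (Units.mk0 2 two_ne_zero))
  have hconj (s : ℝ) : c * ρ.compAddChar h.unip s * (c⁻¹ : (V →L[ℝ] V)ˣ) =
      ρ.compAddChar h.unip (2 * s) := by
    rw [← Units.val_mk0 (two_ne_zero (α := ℝ))]
    simp only [MonoidHom.compAddChar_apply, Function.comp_apply, ← h.boost_conj_unip, map_mul]
    rfl
  obtain ⟨d, a, ha⟩ := exists_eq_sum_range_pow_smul_of_conj (hρ.comp h.continuous_unip) c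
    one_lt_two hconj
  simpa [← ha, Units.smul_def] using isLaurent_sum (Finset.range d) (fun i => (i : ℤ)) a

lemma isLaurent_boost_sq [CompleteSpace V] (hρ : Continuous ρ) (h : HyperbolicFrame p r w) :
    IsLaurent fun s : ℝˣ => ρ (boost h.toHyperbolicPair (s ^ 2)) := by
  have hU := isLaurent_unip hρ h
  have hL := (isLaurent_unip hρ h.swap).comp_inv
  simpa only [h.boost_sq_eq_unip_mul, map_mul] using ((hU.mul hL).mul hU).mul (isLaurent_const _)

lemma IsStableVec.boost_sq_apply_eq [CompleteSpace V] (hv : IsStableVec ρ G v)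
    (hρ : Continuous ρ) (h : HyperbolicFrame p r w) (hp : IsLimitDirection n G p)
    (hr : IsLimitDirection n G r) (s : ℝˣ) : ρ (boost h.toHyperbolicPair (s ^ 2)) v = v := by
  let D : ℝˣ →* (V →L[ℝ] V) := ρ.comp ((boost h.toHyperbolicPair).comp (powMonoidHom 2))
  have hv_inv := recurrentlyBounded_boost_sq hρ hv hr h.symm
  simp only [boost_symm h.toHyperbolicPair, ← inv_pow] at hv_inv
  exact apply_eq_self_of_recurrentlyBounded (D := D) (isLaurent_boost_sq hρ h)
    (recurrentlyBounded_boost_sq hρ hv hp h.toHyperbolicPair) hv_inv s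

end BoostsFixStableVectors

section BigCell

variable {n : ℕ} {p r w : Fin (n + 1) → ℝ}

lemma eq_zero_of_forall_lorForm_eq_zero (hn : n ≠ 0) {x : Fin (n + 1) → ℝ}
    (hx : ∀ y, ⟪x, y⟫ = 0) : x = 0 := by
  refine dotProduct_self_eq_zero.1 ?_
  rw [← lorForm_add_basePt_mul_basePt hn, hx, lorForm_comm _ x, hx, mul_zero, add_zero]

/-- The subgroup of `O(1,n)` fixing every vector orthogonal to `s`. -/
def orthFixer (s : Set (Fin (n + 1) → ℝ)) : Subgroup (LorentzGrp n) where
  carrier := {g | ∀ y, (∀ e ∈ s, ⟪e, y⟫ = 0) → lorRep n g y = y}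
  one_mem' y _ := by rw [map_one, Module.End.one_apply]
  mul_mem' {a b} ha hb y hy := by rw [lorRep_mul_apply, hb y hy, ha y hy]
  inv_mem' {a} ha y hy := by conv_lhs => rw [← ha y hy, lorRep_inv_lorRep]

lemma mem_orthFixer_triple {g : LorentzGrp n} : g ∈ orthFixer {p, r, w} ↔
    ∀ y, ⟪p, y⟫ = 0 → ⟪r, y⟫ = 0 → ⟪w, y⟫ = 0 → lorRep n g y = y := by
  simp [orthFixer]

/-- The subgroup of `O(1,n)` of elements of positive determinant. -/
def properLorentzGrp (n : ℕ) : Subgroup (LorentzGrp n) :=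
  (Units.posSubgroup ℝ).comap (LinearMap.det.comp (lorRep n)).toHomUnits

lemma mem_properLorentzGrp {g : LorentzGrp n} :
    g ∈ properLorentzGrp n ↔ 0 < LinearMap.det (lorRep n g) := Iff.rfl

lemma sq_mem_properLorentzGrp (g : LorentzGrp n) : g ^ 2 ∈ properLorentzGrp n := by
  rw [mem_properLorentzGrp, map_pow, map_pow]
  exact sq_pos_of_ne_zero (((Group.isUnit g).map (lorRep n)).map LinearMap.det).ne_zero

lemma continuous_det_lorRep : Continuous fun g : LorentzGrp n => LinearMap.det (lorRep n g) := by
  have hdet (g : LorentzGrp n) : LinearMap.det (lorRep n g) =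
      ((g : GL (Fin (n + 1)) ℝ) : Matrix (Fin (n + 1)) (Fin (n + 1)) ℝ).det :=
    LinearMap.det_toLin' _
  simp only [hdet]
  exact (Units.continuous_val.comp continuous_subtype_val).matrix_det

namespace HyperbolicFrame

lemma unip_mem_properLorentzGrp (h : HyperbolicFrame p r w) (s : ℝ) :
    h.unip s ∈ properLorentzGrp n := by
  rw [← add_halves s, AddChar.map_add_eq_mul, ← pow_two]
  exact sq_mem_properLorentzGrp _

lemma eq_smul_add_smul_add_smul (h : HyperbolicFrame p r w) {x : Fin (n + 1) → ℝ}
    (hx : ∀ y, ⟪p, y⟫ = 0 → ⟪r, y⟫ = 0 → ⟪w, y⟫ = 0 → ⟪x, y⟫ = 0) :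
    x = ⟪r, x⟫ • p + ⟪p, x⟫ • r + (⟪w, x⟫ / 2) • w := by
  obtain ⟨y, hpy, hry, hwy, hxy⟩ := h.exists_eq_add_orthogonal x
  suffices y = 0 by rwa [this, add_zero] at hxy
  refine eq_zero_of_forall_lorForm_eq_zero h.ne_zero fun z => ?_
  obtain ⟨z', hpz, hrz, hwz, hzz'⟩ := h.exists_eq_add_orthogonal z
  have hxz' := hx z' hpz hrz hwz
  rw [hxy] at hxz'
  rw [hzz']
  simpa [hpz, hrz, hwz, lorForm_comm y p, lorForm_comm y r, lorForm_comm y w, hpy, hry, hwy]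
    using hxz'

lemma lorForm_self_eq (h : HyperbolicFrame p r w) (a b c : ℝ) :
    ⟪a • p + b • r + c • w, a • p + b • r + c • w⟫ = 2 * (a * b + c ^ 2) := by
  simp only [map_add, map_smul, LinearMap.add_apply, LinearMap.smul_apply, smul_eq_mul,
    h.left_null, h.right_null, h.left_right, h.symm.left_right, h.left_third, h.right_third,
    h.third_self, lorForm_comm w p, lorForm_comm w r]
  ring

lemma lorRep_eq_smul_add_smul_add_smul (h : HyperbolicFrame p r w) {g : LorentzGrp n}
    (hg : g ∈ orthFixer {p, r, w}) {x : Fin (n + 1) → ℝ}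
    (hx : ∀ y, ⟪p, y⟫ = 0 → ⟪r, y⟫ = 0 → ⟪w, y⟫ = 0 → ⟪x, y⟫ = 0) :
    lorRep n g x = ⟪r, lorRep n g x⟫ • p + ⟪p, lorRep n g x⟫ • r +
      (⟪w, lorRep n g x⟫ / 2) • w := by
  refine h.eq_smul_add_smul_add_smul fun y hp hr hw => ?_
  rw [← mem_orthFixer_triple.1 hg y hp hr hw, lorForm_lorRep, hx y hp hr hw]

lemma unip_mem_orthFixer (h : HyperbolicFrame p r w) (s : ℝ) : h.unip s ∈ orthFixer {p, r, w} :=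
  mem_orthFixer_triple.2 fun _ hp _ hw => h.unip_orthogonal s hp hw

lemma swap_unip_mem_orthFixer (h : HyperbolicFrame p r w) (s : ℝ) :
    h.swap.unip s ∈ orthFixer {p, r, w} :=
  mem_orthFixer_triple.2 fun _ _ hr hw => h.swap.unip_orthogonal s hr hw

lemma boost_mem_orthFixer (h : HyperbolicFrame p r w) (c : ℝˣ) :
    boost h.toHyperbolicPair c ∈ orthFixer {p, r, w} :=
  mem_orthFixer_triple.2 fun _ hp hr _ => boost_orthogonal _ c hp hr

lemma exists_lorRep_left_eq (h : HyperbolicFrame p r w) {g : LorentzGrp n}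
    (hg : g ∈ orthFixer {p, r, w}) (hpos : 0 < ⟪r, lorRep n g p⟫) :
    ∃ (s : ℝ) (c : ℝˣ), lorRep n g p =
      lorRep n (h.swap.unip s * boost h.toHyperbolicPair (c ^ 2)) p := by
  have hexp := h.lorRep_eq_smul_add_smul_add_smul hg (x := p) fun _ hp _ _ => hp
  have hnull := (lorForm_lorRep g p p).trans h.left_null
  rw [hexp, h.lorForm_self_eq] at hnull
  set a := ⟪r, lorRep n g p⟫
  set b := ⟪p, lorRep n g p⟫
  set d := ⟪w, lorRep n g p⟫ / 2
  have hb : b = -(d ^ 2 / a) := by field_simp; linarith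
  refine ⟨d / a, Units.mk0 (√a) (Real.sqrt_pos.2 hpos).ne', ?_⟩
  rw [hexp, hb, lorRep_mul_apply, boost_left, map_smul, h.swap.unip_right, Units.val_pow_eq_pow_val,
    Units.val_mk0, Real.sq_sqrt hpos.le]
  match_scalars <;> field_simp

lemma exists_lorRep_right_eq (h : HyperbolicFrame p r w) {g : LorentzGrp n}
    (hg : g ∈ orthFixer {p, r, w}) (hgp : lorRep n g p = p) :
    ∃ t : ℝ, lorRep n g r = lorRep n (h.unip t) r := by
  have hexp := h.lorRep_eq_smul_add_smul_add_smul hg (x := r) fun _ _ hr _ => hr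
  have hpr : ⟪p, lorRep n g r⟫ = 1 := by
    conv_lhs => rw [← hgp, lorForm_lorRep, h.left_right]
  have hnull := (lorForm_lorRep g r r).trans h.right_null
  rw [hexp, h.lorForm_self_eq, hpr] at hnull
  refine ⟨⟪w, lorRep n g r⟫ / 2, ?_⟩
  have hrr : ⟪r, lorRep n g r⟫ = -(⟪w, lorRep n g r⟫ / 2) ^ 2 := by linarith
  rw [hpr, hrr] at hexp
  rw [h.unip_right]
  exact hexp.trans (by module)

lemma eq_one_of_lorRep_eq (h : HyperbolicFrame p r w) {g : LorentzGrp n}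
    (hg : g ∈ orthFixer {p, r, w}) (hgp : lorRep n g p = p) (hgr : lorRep n g r = r)
    (hdet : g ∈ properLorentzGrp n) : g = 1 := by
  have hpw : ⟪p, lorRep n g w⟫ = 0 := by
    conv_lhs => rw [← hgp, lorForm_lorRep, h.left_third]
  have hrw : ⟪r, lorRep n g w⟫ = 0 := by
    conv_lhs => rw [← hgr, lorForm_lorRep, h.right_third]
  obtain ⟨d, hd⟩ : ∃ d : ℝ, lorRep n g w = d • w := by
    have hexp := h.lorRep_eq_smul_add_smul_add_smul hg (x := w) fun _ _ _ hw => hw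
    rw [hpw, hrw, zero_smul, zero_smul, zero_add, zero_add] at hexp
    exact ⟨_, hexp⟩
  have hd_sq : d * d = 1 := by
    have hself := lorForm_lorRep g w w
    rw [hd] at hself
    simp only [map_smul, LinearMap.smul_apply, h.third_self, smul_eq_mul] at hself
    linarith
  rcases mul_self_eq_one_iff.1 hd_sq with rfl | rfl
  · refine h.lorRep_ext ?_ ?_ ?_ fun y hp hr hw => ?_ <;> rw [map_one, Module.End.one_apply]
    · exact hgp
    · exact hgr
    · rw [hd, one_smul]
    · exact mem_orthFixer_triple.1 hg y hp hr hw
  · have hreflection : lorRep n g = LinearMap.transvection (lorForm n w) (-w) := by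
      refine LinearMap.ext fun x => ?_
      obtain ⟨y, hpy, hry, hwy, hxy⟩ := h.exists_eq_add_orthogonal x
      rw [hxy]
      simp only [LinearMap.transvection.apply, map_add, map_smul, hgp, hgr, hd,
        mem_orthFixer_triple.1 hg y hpy hry hwy, hwy, lorForm_comm w p, lorForm_comm w r,
        h.left_third, h.right_third, h.third_self]
      module
    have hdet_eq := mem_properLorentzGrp.1 hdet
    rw [hreflection, LinearMap.transvection.det, map_neg, h.third_self] at hdet_eq
    norm_num at hdet_eq

lemma exists_eq_unip_mul_boost_mul_unip (h : HyperbolicFrame p r w) {g : LorentzGrp n}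
    (hg : g ∈ orthFixer {p, r, w}) (hdet : g ∈ properLorentzGrp n)
    (hpos : 0 < ⟪r, lorRep n g p⟫) :
    ∃ (s : ℝ) (c : ℝˣ) (t : ℝ),
      g = h.swap.unip s * boost h.toHyperbolicPair (c ^ 2) * h.unip t := by
  obtain ⟨s, c, hsc⟩ := h.exists_lorRep_left_eq hg hpos
  set b := h.swap.unip s * boost h.toHyperbolicPair (c ^ 2)
  have hb : b ∈ orthFixer {p, r, w} :=
    mul_mem (h.swap_unip_mem_orthFixer s) (h.boost_mem_orthFixer _)
  have hb_proper : b ∈ properLorentzGrp n :=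
    mul_mem (h.swap.unip_mem_properLorentzGrp s) (by
      rw [map_pow]
      exact sq_mem_properLorentzGrp _)
  have hbg : lorRep n (b⁻¹ * g) p = p := by rw [lorRep_mul_apply, hsc, lorRep_inv_lorRep]
  obtain ⟨t, ht⟩ := h.exists_lorRep_right_eq (mul_mem (inv_mem hb) hg) hbg
  refine ⟨s, c, t, ?_⟩
  have hone : (h.unip t)⁻¹ * (b⁻¹ * g) = 1 := by
    refine h.eq_one_of_lorRep_eq ?_ ?_ ?_ ?_
    · exact mul_mem (inv_mem (h.unip_mem_orthFixer t)) (mul_mem (inv_mem hb) hg)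
    · rw [lorRep_mul_apply, hbg, ← AddChar.map_neg_eq_inv, h.unip_left]
    · rw [lorRep_mul_apply, ht, lorRep_inv_lorRep]
    · exact mul_mem (inv_mem (h.unip_mem_properLorentzGrp t)) (mul_mem (inv_mem hb_proper) hdet)
  rw [← inv_mul_eq_iff_eq_mul]
  exact (inv_mul_eq_one.1 hone).symm

lemma mem_nhdsWithin_orthFixer (h : HyperbolicFrame p r w) {H : Subgroup (LorentzGrp n)}
    (hunip : ∀ s, h.unip s ∈ H) (hswap : ∀ s, h.swap.unip s ∈ H)
    (hboost : ∀ c, boost h.toHyperbolicPair (c ^ 2) ∈ H) :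
    (H : Set (LorentzGrp n)) ∈ 𝓝[orthFixer {p, r, w}] 1 := by
  have hcoord : Continuous fun g : LorentzGrp n => ⟪r, lorRep n g p⟫ :=
    continuous_lorForm continuous_const (continuous_lorRep_apply p)
  have hpos : ∀ᶠ g in 𝓝 (1 : LorentzGrp n), 0 < ⟪r, lorRep n g p⟫ :=
    continuous_const.continuousAt.eventually_lt hcoord.continuousAt
      (by simp [h.symm.left_right])
  have hproper : ∀ᶠ g in 𝓝 (1 : LorentzGrp n), g ∈ properLorentzGrp n :=
    continuous_const.continuousAt.eventually_lt continuous_det_lorRep.continuousAt (by simp)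
  filter_upwards [nhdsWithin_le_nhds hpos, nhdsWithin_le_nhds hproper, self_mem_nhdsWithin]
    with g hg_pos hg_proper hg
  obtain ⟨s, c, t, rfl⟩ := h.exists_eq_unip_mul_boost_mul_unip hg hg_proper hg_pos
  exact mul_mem (mul_mem (hswap s) (hboost c)) (hunip t)

end HyperbolicFrame

end BigCell

section UnipotentsFixStableVectors

/-- The subgroup of elements which fix `v` under the representation `ρ`. -/
def vecStabilizer {Γ V : Type*} [Group Γ] [NormedAddCommGroup V] [NormedSpace ℝ V]
    (ρ : Γ →* (V →L[ℝ] V)) (v : V) : Subgroup Γ :=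
  (MulAction.stabilizer (V →L[ℝ] V)ˣ v).comap ρ.toHomUnits

variable {n : ℕ} {p r w : Fin (n + 1) → ℝ}

lemma HyperbolicFrame.unip_mem_of_forall_boost_sq_mem (h : HyperbolicFrame p r w)
    {H : Subgroup (LorentzGrp n)} {σ : ℝ} (hσ : σ ≠ 0)
    (hboost : ∀ c, boost h.toHyperbolicPair (c ^ 2) ∈ H)
    (hboost_map : ∀ c, boost (h.toHyperbolicPair.map (h.unip σ)) (c ^ 2) ∈ H) (t : ℝ) :
    h.unip t ∈ H := by
  have hmem_of_lt {t : ℝ} (ht : t / σ < 1) : h.unip t ∈ H := by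
    let c := Units.mk0 (√(1 - t / σ)) (Real.sqrt_pos.2 (sub_pos.2 ht)).ne'
    have hc : ((c ^ 2 : ℝˣ) : ℝ) = 1 - t / σ := by
      rw [Units.val_pow_eq_pow_val, Units.val_mk0, Real.sq_sqrt (sub_pos.2 ht).le]
    have hcomm : h.unip t = boost (h.toHyperbolicPair.map (h.unip σ)) (c ^ 2) *
        (boost h.toHyperbolicPair (c ^ 2))⁻¹ := by
      calc h.unip t = h.unip (σ + (c ^ 2 : ℝˣ) * -σ) := by
            rw [hc]
            field_simp
            ring_nf
        _ = _ := by
            rw [AddChar.map_add_eq_mul, ← h.boost_conj_unip, AddChar.map_neg_eq_inv,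
              ← conj_boost h.toHyperbolicPair]
            group
    rw [hcomm]
    exact mul_mem (hboost_map c) (inv_mem (hboost c))
  rcases lt_or_ge (t / σ) 1 with ht | ht
  · exact hmem_of_lt ht
  · rw [← inv_mem_iff, ← AddChar.map_neg_eq_inv]
    exact hmem_of_lt (by rw [neg_div]; linarith)

variable {V : Type*} [NormedAddCommGroup V] [NormedSpace ℝ V]
  {ρ : LorentzGrp n →* (V →L[ℝ] V)} {G : Set (LorentzGrp n)} {v : V}

lemma IsLimitDirection.lorForm_self (hp : IsLimitDirection n G p) : ⟪p, p⟫ = 0 :=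
  (lorQ_eq_lorForm p).symm.trans hp.2.1

lemma IsLimitDirection.smul (hp : IsLimitDirection n G p) {c : ℝ}
    (hc : c ≠ 0) : IsLimitDirection n G (c • p) := by
  obtain ⟨hp0, hnull, g, lam, hg, hlim⟩ := hp
  refine ⟨smul_ne_zero hc hp0, ?_, g, fun k => c * lam k, hg, ?_⟩
  · rw [lorQ_eq_lorForm] at hnull ⊢
    rw [map_smul, map_smul, LinearMap.smul_apply, hnull, smul_zero, smul_zero]
  · simpa only [mul_smul] using hlim.const_smul c

lemma IsStableVec.unip_mem_vecStabilizer [CompleteSpace V] (hv : IsStableVec ρ G v)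
    (hρ : Continuous ρ) (h : HyperbolicFrame p r w) (hp : IsLimitDirection n G p)
    (hr : IsLimitDirection n G r) {σ : ℝ} (hσ : σ ≠ 0)
    (hur : IsLimitDirection n G (lorRep n (h.unip σ) r)) (t : ℝ) :
    h.unip t ∈ vecStabilizer ρ v := by
  have hup : IsLimitDirection n G (lorRep n (h.unip σ) p) := by rwa [h.unip_left]
  exact h.unip_mem_of_forall_boost_sq_mem hσ (hv.boost_sq_apply_eq hρ h hp hr)
    (hv.boost_sq_apply_eq hρ (h.map (h.unip σ)) hup hur) t

lemma IsStableVec.connectedComponentIn_orthFixer_subset [CompleteSpace V]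
    (hv : IsStableVec ρ G v) (hρ : Continuous ρ) (h : HyperbolicFrame p r w)
    (hp : IsLimitDirection n G p) (hr : IsLimitDirection n G r)
    (hthird : IsLimitDirection n G (r + w - p)) :
    connectedComponentIn (orthFixer {p, r, w} : Set (LorentzGrp n)) 1 ⊆ vecStabilizer ρ v := by
  have hunip_one : lorRep n (h.unip 1) r = r + w - p := by
    rw [h.unip_right]
    module
  have hswap_neg_one : lorRep n (h.swap.unip (-1)) p = (-1 : ℝ) • (r + w - p) := by
    rw [h.swap.unip_right]
    module
  refine connectedComponentIn_one_subset_of_mem_nhdsWithin (h.mem_nhdsWithin_orthFixer ?_ ?_ ?_)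
  · exact hv.unip_mem_vecStabilizer hρ h hp hr one_ne_zero (hunip_one ▸ hthird)
  · exact hv.unip_mem_vecStabilizer hρ h.swap hr hp (neg_ne_zero.2 one_ne_zero)
      (hswap_neg_one ▸ hthird.smul (neg_ne_zero.2 one_ne_zero))
  · exact hv.boost_sq_apply_eq hρ h hp hr

end UnipotentsFixStableVectors

section Normalization

variable {n : ℕ} {x y z : Fin (n + 1) → ℝ}

lemma lorForm_mul_basePt_mul_basePt_neg (hx : ⟪x, x⟫ = 0) (hx0 : x ≠ 0) (hy : ⟪y, y⟫ = 0)
    (hxy : ∀ c : ℝ, y ≠ c • x) : ⟪x, y⟫ * (⟪basePt n, x⟫ * ⟪basePt n, y⟫) < 0 := by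
  have hox := lorForm_basePt_ne_zero hx hx0
  set z := ⟪basePt n, x⟫ • y - ⟪basePt n, y⟫ • x
  have hz0 : z ≠ 0 := fun hz => hxy (⟪basePt n, x⟫⁻¹ * ⟪basePt n, y⟫) <| by
    rw [mul_smul, ← sub_eq_zero.1 hz, inv_smul_smul₀ hox]
  have hdot : z ⬝ᵥ z = -2 * (⟪x, y⟫ * (⟪basePt n, x⟫ * ⟪basePt n, y⟫)) := by
    rw [← lorForm_add_basePt_mul_basePt (ne_zero_of_lorForm_self_eq_zero hx hx0)]
    simp only [z, map_sub, map_smul, LinearMap.sub_apply, LinearMap.smul_apply, smul_eq_mul, hx, hy,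
      lorForm_comm y x]
    ring
  have hpos : 0 < z ⬝ᵥ z := dotProduct_self_star_pos_iff.2 hz0
  linarith

lemma exists_mul_eq_one_of_mul_mul_neg {a b c : ℝ} (habc : a * b * c < 0) :
    ∃ k l m : ℝ, k * l * a = 1 ∧ k * m * b = 1 ∧ l * m * c = -1 := by
  have hab : a * b ≠ 0 := left_ne_zero_of_mul habc.ne
  have hquot : 0 < -c / (a * b) := by
    rw [← mul_div_mul_right _ _ hab]
    exact div_pos (by linarith) (mul_self_pos.2 hab)
  obtain ⟨k, hk0, hk_sq⟩ : ∃ k, k ≠ 0 ∧ k ^ 2 = -c / (a * b) :=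
    ⟨√(-c / (a * b)), (Real.sqrt_pos.2 hquot).ne', Real.sq_sqrt hquot.le⟩
  refine ⟨k, (k * a)⁻¹, (k * b)⁻¹, ?_, ?_, ?_⟩
  · rw [mul_right_comm, mul_inv_cancel₀ (mul_ne_zero hk0 (left_ne_zero_of_mul hab))]
  · rw [mul_right_comm, mul_inv_cancel₀ (mul_ne_zero hk0 (right_ne_zero_of_mul hab))]
  · rw [← mul_inv, mul_mul_mul_comm, ← pow_two, hk_sq, div_mul_cancel₀ _ hab, inv_mul_eq_div,
      div_neg, div_self (right_ne_zero_of_mul habc.ne)]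

lemma exists_hyperbolicFrame_smul (hx : ⟪x, x⟫ = 0) (hx0 : x ≠ 0) (hy : ⟪y, y⟫ = 0) (hy0 : y ≠ 0)
    (hz : ⟪z, z⟫ = 0) (hxy : ∀ c : ℝ, y ≠ c • x) (hxz : ∀ c : ℝ, z ≠ c • x)
    (hyz : ∀ c : ℝ, z ≠ c • y) :
    ∃ k l m : ℝ, k ≠ 0 ∧ l ≠ 0 ∧ m ≠ 0 ∧
      HyperbolicFrame (k • x) (l • y) (m • z - l • y + k • x) := by
  have hneg : ⟪x, y⟫ * ⟪x, z⟫ * ⟪y, z⟫ < 0 := by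
    have h1 := lorForm_mul_basePt_mul_basePt_neg hx hx0 hy hxy
    have h2 := lorForm_mul_basePt_mul_basePt_neg hx hx0 hz hxz
    have h3 := lorForm_mul_basePt_mul_basePt_neg hy hy0 hz hyz
    have hprod := mul_neg_of_pos_of_neg (mul_pos_of_neg_of_neg h1 h2) h3
    refine neg_of_mul_neg_left (lt_of_eq_of_lt ?_ hprod)
      (sq_nonneg (⟪basePt n, x⟫ * ⟪basePt n, y⟫ * ⟪basePt n, z⟫))
    ring
  obtain ⟨k, l, m, hxy1, hxz1, hyz1⟩ := exists_mul_eq_one_of_mul_mul_neg hneg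
  have hkl : k * l ≠ 0 := left_ne_zero_of_mul (hxy1.trans_ne one_ne_zero)
  have hkm : k * m ≠ 0 := left_ne_zero_of_mul (hxz1.trans_ne one_ne_zero)
  refine ⟨k, l, m, left_ne_zero_of_mul hkl, right_ne_zero_of_mul hkl, right_ne_zero_of_mul hkm,
    ⟨?_, ?_, ?_⟩, ?_, ?_, ?_⟩ <;>
    simp only [map_add, map_sub, map_smul, LinearMap.add_apply, LinearMap.sub_apply,
      LinearMap.smul_apply, smul_eq_mul, hx, hy, hz, lorForm_comm y x, lorForm_comm z x,
      lorForm_comm z y] <;>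
    linarith

end Normalization

section IdentityComponentOfSpan

variable {n : ℕ} {G : Set (LorentzGrp n)} {p p' p'' : Fin (n + 1) → ℝ}

lemma SOIdComp_subset_connectedComponentIn_orthFixer {E : Submodule ℝ (Fin (n + 1) → ℝ)}
    {s : Set (Fin (n + 1) → ℝ)} (hE : E ≤ Submodule.span ℝ s) :
    SOIdComp n E ⊆ connectedComponentIn (orthFixer s : Set (LorentzGrp n)) 1 := by
  refine connectedComponentIn_mono 1 fun g hg y hy => hg.2 y fun e he => ?_
  have hspan : Submodule.span ℝ s ≤ LinearMap.ker (lorForm n y) :=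
    Submodule.span_le.2 fun x hx => LinearMap.mem_ker.2 ((lorForm_comm y x).trans (hy x hx))
  exact hspan (hE he)

lemma span_triple_le_span_smul {k l m : ℝ} (hk : k ≠ 0) (hl : l ≠ 0) (hm : m ≠ 0) :
    Submodule.span ℝ {p, p', p''} ≤
      Submodule.span ℝ {k • p, l • p', m • p'' - l • p' + k • p} := by
  set S := Submodule.span ℝ {k • p, l • p', m • p'' - l • p' + k • p}
  have hp : k • p ∈ S := Submodule.subset_span (by simp)
  have hp' : l • p' ∈ S := Submodule.subset_span (by simp)
  have hw : m • p'' - l • p' + k • p ∈ S := Submodule.subset_span (by simp)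
  have hp'' : m • p'' ∈ S := by
    rw [S.add_mem_iff_left hp] at hw
    exact (S.sub_mem_iff_left hp').1 hw
  rw [Submodule.span_le, Set.insert_subset_iff, Set.insert_subset_iff, Set.singleton_subset_iff]
  exact ⟨(S.smul_mem_iff hk).1 hp, (S.smul_mem_iff hl).1 hp', (S.smul_mem_iff hm).1 hp''⟩

lemma IsStableVec.SOIdComp_span_subset_vecStabilizer {V : Type*} [NormedAddCommGroup V]
    [NormedSpace ℝ V] [CompleteSpace V] {ρ : LorentzGrp n →* (V →L[ℝ] V)} {v : V}
    (hv : IsStableVec ρ G v) (hρ : Continuous ρ) (hp : IsLimitDirection n G p)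
    (hp' : IsLimitDirection n G p') (hp'' : IsLimitDirection n G p'')
    (h1 : ∀ c : ℝ, p' ≠ c • p) (h2 : ∀ c : ℝ, p'' ≠ c • p) (h3 : ∀ c : ℝ, p'' ≠ c • p') :
    SOIdComp n (Submodule.span ℝ {p, p', p''}) ⊆ vecStabilizer ρ v := by
  obtain ⟨k, l, m, hk, hl, hm, h⟩ := exists_hyperbolicFrame_smul hp.lorForm_self hp.1
    hp'.lorForm_self hp'.1 hp''.lorForm_self h1 h2 h3
  have hthird : IsLimitDirection n G (l • p' + (m • p'' - l • p' + k • p) - k • p) := by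
    rw [show l • p' + (m • p'' - l • p' + k • p) - k • p = m • p'' by abel]
    exact hp''.smul hm
  exact (SOIdComp_subset_connectedComponentIn_orthFixer (span_triple_le_span_smul hk hl hm)).trans
    (hv.connectedComponentIn_orthFixer_subset hρ h (hp.smul hk) (hp'.smul hl) hthird)

end IdentityComponentOfSpan

lemma IsStableVec.coe_completion {n : ℕ} {V : Type*}
    [NormedAddCommGroup V] [NormedSpace ℝ V] {ρ : LorentzGrp n →* (V →L[ℝ] V)}
    {G : Set (LorentzGrp n)} {v : V} (hv : IsStableVec ρ G v) :
    IsStableVec (completionHom.comp ρ) G (v : UniformSpace.Completion V) := by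
  obtain ⟨C, hC⟩ := hv.exists_norm_le
  refine isBounded_iff_forall_norm_le.2 ⟨C, ?_⟩
  rintro _ ⟨g, hg, rfl⟩
  rw [MonoidHom.comp_apply, completionHom_apply_coe, UniformSpace.Completion.norm_coe]
  exact hC _ ⟨g, hg, rfl⟩

theorem stable_vector_fixed_by_SO_of_three_limit_directions_general
    {n : ℕ} {V : Type*} [NormedAddCommGroup V] [NormedSpace ℝ V]
    {ρ : LorentzGrp n →* (V →L[ℝ] V)} (hρ : Continuous ρ) {G : Set (LorentzGrp n)}
    {p p' p'' : Fin (n + 1) → ℝ} (hp : IsLimitDirection n G p) (hp' : IsLimitDirection n G p')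
    (hp'' : IsLimitDirection n G p'') (h1 : ∀ c : ℝ, p' ≠ c • p) (h2 : ∀ c : ℝ, p'' ≠ c • p)
    (h3 : ∀ c : ℝ, p'' ≠ c • p') {v : V} (hv : IsStableVec ρ G v) :
    ∀ g ∈ SOIdComp n (Submodule.span ℝ {p, p', p''}), ρ g v = v := by
  intro g hg
  have hfixed : completionHom (ρ g) v = v :=
    hv.coe_completion.SOIdComp_span_subset_vecStabilizer (continuous_completionHom.comp hρ)
      hp hp' hp'' h1 h2 h3 hg
  rw [completionHom_apply_coe] at hfixed
  exact UniformSpace.Completion.coe_injective V hfixed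

/-- Let `n ≥ 2` and let `ρ` be a continuous representation of `O(1,n)` on a
finite-dimensional real normed vector space `V`, and `𝒢 ⊆ O(1,n)`. Let `p, p', p''` be three
pairwise non-proportional limit directions of `𝒢` and `E = span{p, p', p''}`. Then every vector
`v` stable under `𝒢` is fixed by `SO°(E)`. -/
theorem stable_vector_fixed_by_SO_of_three_limit_directions
    (n : ℕ) (hn : 2 ≤ n)
    (V : Type*) [NormedAddCommGroup V] [NormedSpace ℝ V] [FiniteDimensional ℝ V]
    (ρ : LorentzGrp n →* (V →L[ℝ] V)) (hρ : Continuous fun g => ρ g)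
    (G : Set (LorentzGrp n))
    (p p' p'' : Fin (n + 1) → ℝ)
    (hp : IsLimitDirection n G p) (hp' : IsLimitDirection n G p')
    (hp'' : IsLimitDirection n G p'')
    (h1 : ∀ c : ℝ, p' ≠ c • p) (h2 : ∀ c : ℝ, p'' ≠ c • p) (h3 : ∀ c : ℝ, p'' ≠ c • p')
    (E : Submodule ℝ (Fin (n + 1) → ℝ))
    (hE : E = Submodule.span ℝ {p, p', p''})
    (v : V) (hv : IsStableVec ρ G v) :
    ∀ g ∈ SOIdComp n E, ρ g v = v := by
  subst hE
  exact stable_vector_fixed_by_SO_of_three_limit_directions_general hρ hp hp' hp'' h1 h2 h3 hv
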